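/- Let k be a positive integer divisible by 4 and let C and t be as in Definition 8. Then C(a_i) = Z_t ξ_{t+1} for every i ∈ {1,...,k}; that is, the C-image of each word a_i coincides with the C-image of x_1 x_2 ... x_k, namely Z_t ξ_{t+1}. -/

import Mathlib

/-- The cycle `(1,3,5,...,k-1)` on `{1,...,k}` (as a function on `ℕ`,
fixing everything else in `{1,...,k}`). -/
def f1 (k : ℕ) : ℕ → ℕ := fun j => if j % 2 = 1 then (if j + 2 ≤ k then j + 2 else 1) else j

/-- The cycle `(2,6,10,...,k-2)` on `{1,...,k}`. -/
def g1 (k : ℕ) : ℕ → ℕ := fun j => if j % 4 = 2 then (if j + 4 ≤ k then j + 4 else 2) else j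

/-- The `k` permutations `v_1,...,v_k` of `{1,...,k}`:
`v_j = f_j = f1^j` for `1 ≤ j ≤ k/2` and `v_{k/2+j} = g_j = g1 ∘ f1^(j-1)` for `1 ≤ j ≤ k/2`. -/
def v (k i : ℕ) : ℕ → ℕ :=
  if i ≤ k / 2 then (f1 k)^[i] else g1 k ∘ (f1 k)^[i - k / 2 - 1]

/-- The word `a_i = x_{v_i(1)} x_{v_i(2)} ... x_{v_i(k)}` over the alphabet
`X = {x_1,...,x_k}`, where the letter `x_p` is encoded by its index `p : ℕ`. -/
def aw (k i : ℕ) : List ℕ := (List.range k).map (fun p => v k i (p + 1))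

/-- The words `J_1 = a_1`, `J_{m+1} = φ₀(J_m)` where `φ₀(x_i) = a_i` letterwise;
`Jw k m` is `J_{m+1}`, so `Jw k` enumerates `J_1, J_2, ...`. -/
def Jw (k : ℕ) : ℕ → List ℕ
  | 0 => aw k 1
  | m + 1 => (Jw k m).flatMap (aw k)

/-- The Zimin words over the alphabet `Ξ = {ξ_1, ξ_2, ...}` (the letter `ξ_i`
is encoded by `i : ℕ`): `Z_1 = ξ_1`, `Z_{n+1} = Z_n ξ_{n+1} Z_n`
(with the convention `Z_0` empty). -/
def Zimin : ℕ → List ℕ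
  | 0 => []
  | n + 1 => Zimin n ++ [n + 1] ++ Zimin n

/-- `C(x_1 x_2 ... x_{k-1})`: the `p`-th letter is `ξ_{i+1}` where
`p = 2^i(2r+1)`, i.e. `i = padicValNat 2 p`. -/
def CW (k : ℕ) : List ℕ := (List.range (k - 1)).map (fun q => padicValNat 2 (q + 1) + 1)

/-- The map `C` of Definition 8 on the letters of `X`: `C(x_p) = ξ_{ν₂(p)+1}`
for `1 ≤ p ≤ k-1`, and `C(x_k) = Z' ξ_{t+1}` where `Z_t = C(x_1...x_{k-1}) Z'`
for the least `t` making `C(x_1...x_{k-1})` a prefix of `Z_t`;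
`C` is extended letterwise to words via `List.flatMap`. -/
def Cmap (k t : ℕ) (Z' : List ℕ) : ℕ → List ℕ :=
  fun p => if p = k then Z' ++ [t + 1] else [padicValNat 2 p + 1]

/-!
Each `v_i` is a product of powers of the cycles `f_1` on the odd indices and `g_1` on the indices
congruent to `2` modulo `4`. On these two classes the 2-adic valuation is constant, equal to `0`
and `1`, and since `4 ∣ k` the exceptional letter `x_k` lies in neither. So `C` is constantly `ξ_1`
on the first class and `ξ_2` on the second, whence `C ∘ v_i = C`: rearranging
`x_1 x_2 ... x_k` by `v_i` does not change its `C`-image.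
-/

theorem padicValNat_eq_one_of_dvd_of_not_sq_dvd {p n : ℕ} [Fact p.Prime]
    (hdvd : p ∣ n) (hsq : ¬p ^ 2 ∣ n) : padicValNat p n = 1 := by
  have hn : n ≠ 0 := by
    rintro rfl
    exact hsq (dvd_zero _)
  have hle : ¬2 ≤ padicValNat p n := mt (padicValNat_dvd_iff_le hn).mpr hsq
  have hge : 1 ≤ padicValNat p n := one_le_padicValNat_of_dvd hn hdvd
  omega

theorem f1_mod_two (k j : ℕ) : f1 k j % 2 = j % 2 := by
  unfold f1
  split_ifs <;> omega

theorem f1_of_mod_two_ne_one (k : ℕ) {j : ℕ} (hj : j % 2 ≠ 1) : f1 k j = j :=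
  if_neg hj

theorem g1_mod_four (k j : ℕ) : g1 k j % 4 = j % 4 := by
  unfold g1
  split_ifs <;> omega

theorem g1_of_mod_four_ne_two (k : ℕ) {j : ℕ} (hj : j % 4 ≠ 2) : g1 k j = j :=
  if_neg hj

theorem comp_v {α : Type*} {k : ℕ} {φ : ℕ → α} (hf : φ ∘ f1 k = φ) (hg : φ ∘ g1 k = φ) (i : ℕ) :
    φ ∘ v k i = φ := by
  unfold v
  split_ifs
  · exact Function.iterate_invariant hf _
  · rw [← Function.comp_assoc, hg, Function.iterate_invariant hf]

theorem flatMap_aw_of_comp_v {α : Type*} {k i : ℕ} {φ : ℕ → List α} (h : φ ∘ v k i = φ) :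
    (aw k i).flatMap φ = ((List.range k).map (fun p => p + 1)).flatMap φ := by
  rw [aw, List.flatMap_map, List.flatMap_map]
  exact List.flatMap_congr fun p _ => congrFun h (p + 1)

section Cmap

variable {k : ℕ} (t : ℕ) (Z' : List ℕ)

theorem Cmap_self : Cmap k t Z' k = Z' ++ [t + 1] :=
  if_pos rfl

theorem Cmap_of_ne {j : ℕ} (hj : j ≠ k) : Cmap k t Z' j = [padicValNat 2 j + 1] :=
  if_neg hj

theorem Cmap_of_odd (hk : 2 ∣ k) {j : ℕ} (hj : j % 2 = 1) : Cmap k t Z' j = [1] := by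
  rw [Cmap_of_ne t Z' (by omega), padicValNat.eq_zero_of_not_dvd (by omega)]

theorem Cmap_of_mod_four_eq_two (hk : k % 4 ≠ 2) {j : ℕ} (hj : j % 4 = 2) :
    Cmap k t Z' j = [2] := by
  rw [Cmap_of_ne t Z' (by rintro rfl; exact hk hj),
    padicValNat_eq_one_of_dvd_of_not_sq_dvd (by omega) (by omega)]

theorem Cmap_comp_f1 (hk : 2 ∣ k) : Cmap k t Z' ∘ f1 k = Cmap k t Z' := by
  funext j
  rw [Function.comp_apply]
  by_cases hj : j % 2 = 1
  · rw [Cmap_of_odd t Z' hk hj, Cmap_of_odd t Z' hk ((f1_mod_two k j).trans hj)]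
  · rw [f1_of_mod_two_ne_one k hj]

theorem Cmap_comp_g1 (hk : k % 4 ≠ 2) : Cmap k t Z' ∘ g1 k = Cmap k t Z' := by
  funext j
  rw [Function.comp_apply]
  by_cases hj : j % 4 = 2
  · rw [Cmap_of_mod_four_eq_two t Z' hk hj,
      Cmap_of_mod_four_eq_two t Z' hk ((g1_mod_four k j).trans hj)]
  · rw [g1_of_mod_four_ne_two k hj]

theorem Cmap_comp_v (h4 : 4 ∣ k) (i : ℕ) : Cmap k t Z' ∘ v k i = Cmap k t Z' :=
  comp_v (Cmap_comp_f1 t Z' (by omega)) (Cmap_comp_g1 t Z' (by omega)) i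

theorem flatMap_Cmap_range_pred :
    (List.range (k - 1)).flatMap (fun p => Cmap k t Z' (p + 1)) = CW k := by
  rw [CW, List.map_eq_flatMap]
  refine List.flatMap_congr fun p hp => Cmap_of_ne t Z' ?_
  have := List.mem_range.mp hp
  omega

theorem flatMap_Cmap_range (hk : 0 < k) :
    ((List.range k).map (fun p => p + 1)).flatMap (Cmap k t Z') = CW k ++ Z' ++ [t + 1] := by
  have hrange : List.range k = List.range (k - 1) ++ [k - 1] := by
    rw [← List.range_succ, Nat.succ_eq_add_one, Nat.sub_add_cancel hk]
  rw [List.flatMap_map, hrange, List.flatMap_append, flatMap_Cmap_range_pred,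
    List.flatMap_singleton, Nat.sub_add_cancel hk, Cmap_self, List.append_assoc]

end Cmap

theorem C_image_of_a_general {k : ℕ} (hk : 0 < k) (h4 : 4 ∣ k) {t : ℕ} {Z' : List ℕ}
    (hZ' : Zimin t = CW k ++ Z') :
    (∀ i, (aw k i).flatMap (Cmap k t Z') = Zimin t ++ [t + 1]) ∧
    ((List.range k).map (fun p => p + 1)).flatMap (Cmap k t Z') = Zimin t ++ [t + 1] := by
  have hword := flatMap_Cmap_range t Z' hk
  rw [← hZ'] at hword
  exact ⟨fun i => (flatMap_aw_of_comp_v (Cmap_comp_v t Z' h4 i)).trans hword, hword⟩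

/-- Let `t` be the least integer with `C(x_1...x_{k-1})` a prefix of `Z_t` and
write `Z_t = C(x_1...x_{k-1}) Z'`. Then `C(a_i) = Z_t ξ_{t+1}` for every
`i ∈ {1,...,k}`; that is, the `C`-image of each `a_i` coincides with the
`C`-image of `x_1 x_2 ... x_k`, namely `Z_t ξ_{t+1}`. -/
theorem C_image_of_a (k : ℕ) (hk : 0 < k) (h4 : 4 ∣ k)
    (t : ℕ) (ht : CW k <+: Zimin t) (htmin : ∀ s : ℕ, CW k <+: Zimin s → t ≤ s)
    (Z' : List ℕ) (hZ' : Zimin t = CW k ++ Z') :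
    (∀ i ∈ Finset.Icc 1 k, (aw k i).flatMap (Cmap k t Z') = Zimin t ++ [t + 1]) ∧
    ((List.range k).map (fun p => p + 1)).flatMap (Cmap k t Z') = Zimin t ++ [t + 1] := by
  obtain ⟨haw, hword⟩ := C_image_of_a_general hk h4 hZ'
  exact ⟨fun i _ => haw i, hword⟩
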